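/- arXiv:math/0508339 — 2 statements merged into one kernel-verified Lean document; each statement's English description precedes it below -/
import Mathlib

section
/- Let d ≥ 1. There exists a constant C depending only on d such that for every n ≥ 2 and every β ∈ I_n^d, | 1/(π²|β|²) + 1/λ_β | ≤ C/(|β| n), where λ_β = −π² (β_1² c_{β_1} + ⋯ + β_d² c_{β_d}) and c_l = sin²(lπ/2n)/(lπ/2n)². -/
open Real

/-!
The tangent inequality `|x| ≤ |tan x|`, read as `1 / sin² x - 1 / x² ≤ 1`, says that
`x² - sin² x ≤ x² sin² x` on `[-π/2, π/2]`. Put `x_k = β_k π / (2n)`, `X = ∑ x_k²` and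
`Y = ∑ sin² x_k`, so that `π²|β|² = 4n²X` and `λ_β = -4n²Y`. Since `x_k² ≤ (π/2) √X`, summing gives
`0 ≤ X - Y ≤ (π/2) √X · Y`, that is `0 ≤ 1/Y - 1/X ≤ (π/2) / √X`; dividing by `4n²` gives the
estimate with the constant `1/4` in every dimension.
-/

section SumSq

theorem sum_sq_pos_of_ne_zero {ι R : Type*} [Fintype ι] [Ring R] [LinearOrder R]
    [IsStrictOrderedRing R] {x : ι → R} (hx : x ≠ 0) : 0 < ∑ k, x k ^ 2 := by
  obtain ⟨k, hk⟩ := Function.ne_iff.1 hx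
  exact Finset.sum_pos' (fun _ _ => sq_nonneg _) ⟨k, Finset.mem_univ k, sq_pos_of_ne_zero hk⟩

theorem abs_le_sqrt_sum_sq {ι : Type*} [Fintype ι] (x : ι → ℝ) (k : ι) :
    |x k| ≤ √(∑ i, x i ^ 2) :=
  abs_le_sqrt <| Finset.single_le_sum (f := fun i => x i ^ 2) (fun _ _ => sq_nonneg _)
    (Finset.mem_univ k)

end SumSq

section SineSums

theorem sq_sub_sin_sq_le_sq_mul_sin_sq {x : ℝ} (hx : |x| ≤ π / 2) :
    x ^ 2 - sin x ^ 2 ≤ x ^ 2 * sin x ^ 2 := by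
  obtain ⟨hx₁, hx₂⟩ := abs_le.1 hx
  have hcos_le : cos x ≤ 1 / √(x ^ 2 + 1) :=
    cos_le_one_div_sqrt_sq_add_one (by linarith [pi_pos]) (by linarith [pi_pos])
  have hcos_sq : cos x ^ 2 ≤ 1 / (x ^ 2 + 1) := by
    calc cos x ^ 2 ≤ (1 / √(x ^ 2 + 1)) ^ 2 :=
          pow_le_pow_left₀ (cos_nonneg_of_mem_Icc ⟨hx₁, hx₂⟩) hcos_le 2
      _ = 1 / (x ^ 2 + 1) := by rw [div_pow, one_pow, sq_sqrt (by positivity)]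
  rw [le_div_iff₀ (by positivity), cos_sq'] at hcos_sq
  linarith

variable {ι : Type*} [Fintype ι] {x : ι → ℝ}

theorem sum_sin_sq_le_sum_sq (x : ι → ℝ) : ∑ k, sin (x k) ^ 2 ≤ ∑ k, x k ^ 2 :=
  Finset.sum_le_sum fun _ _ => sin_sq_le_sq

theorem sum_sq_sub_sum_sin_sq_le (hx : ∀ k, |x k| ≤ π / 2) :
    ∑ k, x k ^ 2 - ∑ k, sin (x k) ^ 2 ≤ π / 2 * √(∑ k, x k ^ 2) * ∑ k, sin (x k) ^ 2 := by
  rw [← Finset.sum_sub_distrib, Finset.mul_sum]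
  refine Finset.sum_le_sum fun k _ => (sq_sub_sin_sq_le_sq_mul_sin_sq (hx k)).trans ?_
  have hsq : x k ^ 2 ≤ π / 2 * √(∑ i, x i ^ 2) := by
    rw [← sq_abs, sq]
    exact mul_le_mul (hx k) (abs_le_sqrt_sum_sq x k) (abs_nonneg _) (by positivity)
  gcongr

theorem sum_sin_sq_pos (hx : ∀ k, |x k| < π) (hx₀ : x ≠ 0) : 0 < ∑ k, sin (x k) ^ 2 := by
  obtain ⟨k, hk⟩ := Function.ne_iff.1 hx₀
  have hsin : sin (x k) ≠ 0 := fun h =>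
    hk ((sin_eq_zero_iff_of_lt_of_lt (neg_lt_of_abs_lt (hx k)) (lt_of_abs_lt (hx k))).1 h)
  exact sum_sq_pos_of_ne_zero (x := fun k => sin (x k)) (Function.ne_iff.2 ⟨k, hsin⟩)

theorem abs_one_div_sum_sq_sub_one_div_sum_sin_sq_le (hx : ∀ k, |x k| ≤ π / 2) (hx₀ : x ≠ 0) :
    |1 / ∑ k, x k ^ 2 - 1 / ∑ k, sin (x k) ^ 2| ≤ π / 2 / √(∑ k, x k ^ 2) := by
  have hX := sum_sq_pos_of_ne_zero hx₀
  have hY := sum_sin_sq_pos (fun k => (hx k).trans_lt (half_lt_self pi_pos)) hx₀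
  have hsub := sum_sq_sub_sum_sin_sq_le hx
  have hle := one_div_le_one_div_of_le hY (sum_sin_sq_le_sum_sq x)
  set X := ∑ k, x k ^ 2
  set Y := ∑ k, sin (x k) ^ 2
  rw [abs_of_nonpos (sub_nonpos.2 hle)]
  calc -(1 / X - 1 / Y) = (X - Y) / (X * Y) := by field_simp; ring
    _ ≤ π / 2 * √X * Y / (X * Y) := by gcongr
    _ = π / 2 * (√X / X) := by rw [mul_div_mul_right _ _ hY.ne', mul_div_assoc]
    _ = π / 2 / √X := by rw [sqrt_div_self', mul_one_div]

end SineSums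

section Eigenvalues

variable {ι : Type*} [Fintype ι] {n : ℝ}

/-- The Dirichlet eigenvalue `λ_β = -π² ∑ β_k² c_{β_k}` of the discrete Laplacian with mesh `1 / n`,
for real frequencies `β`. If `β k = 0`, then `c_0` is read as `0 / 0 = 0` instead of its limit `1`,
which does not affect the sum. -/
noncomputable def discreteDirichletEigenvalue (n : ℝ) (β : ι → ℝ) : ℝ :=
  -π ^ 2 * ∑ k, β k ^ 2 * (sin (β k * π / (2 * n)) ^ 2 / (β k * π / (2 * n)) ^ 2)

theorem pi_sq_mul_sum_sq_eq (hn : n ≠ 0) (β : ι → ℝ) :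
    π ^ 2 * ∑ k, β k ^ 2 = 4 * n ^ 2 * ∑ k, (β k * π / (2 * n)) ^ 2 := by
  simp only [Finset.mul_sum]
  refine Finset.sum_congr rfl fun k _ => ?_
  field_simp
  ring

theorem discreteDirichletEigenvalue_eq (hn : n ≠ 0) (β : ι → ℝ) :
    discreteDirichletEigenvalue n β = -(4 * n ^ 2 * ∑ k, sin (β k * π / (2 * n)) ^ 2) := by
  rw [discreteDirichletEigenvalue, neg_mul, neg_inj]
  simp only [Finset.mul_sum]
  refine Finset.sum_congr rfl fun k _ => ?_
  rcases eq_or_ne (β k) 0 with hk | hk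
  · simp [hk]
  · field_simp
    ring

theorem pi_mul_sqrt_sum_sq_eq (hn : 0 < n) (β : ι → ℝ) :
    π * √(∑ k, β k ^ 2) = 2 * n * √(∑ k, (β k * π / (2 * n)) ^ 2) := by
  have h := congrArg sqrt (pi_sq_mul_sum_sq_eq hn.ne' β)
  rwa [show 4 * n ^ 2 = (2 * n) ^ 2 by ring, sqrt_mul (sq_nonneg _), sqrt_mul (sq_nonneg _),
    sqrt_sq pi_nonneg, sqrt_sq (by positivity)] at h

theorem abs_mul_pi_div_two_mul_le (hn : 0 < n) {b : ℝ} (hb : |b| ≤ n) :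
    |b * π / (2 * n)| ≤ π / 2 := by
  rw [abs_div, abs_mul, abs_of_pos pi_pos, abs_of_pos (by positivity : 0 < 2 * n)]
  calc |b| * π / (2 * n) ≤ n * π / (2 * n) := by gcongr
    _ = π / 2 := by field_simp

theorem stmt16_general {β : ι → ℝ} (hβ : ∀ k, |β k| ≤ n) (hβ₀ : β ≠ 0) :
    |1 / (π ^ 2 * ∑ k, β k ^ 2) + 1 / discreteDirichletEigenvalue n β| ≤
      1 / 4 / (√(∑ k, β k ^ 2) * n) := by
  obtain ⟨j, hj⟩ := Function.ne_iff.1 hβ₀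
  have hn : 0 < n := (abs_pos.2 hj).trans_le (hβ j)
  have hx : ∀ k, |β k * π / (2 * n)| ≤ π / 2 := fun k => abs_mul_pi_div_two_mul_le hn (hβ k)
  have hx₀ : (fun k => β k * π / (2 * n)) ≠ 0 :=
    Function.ne_iff.2 ⟨j, div_ne_zero (mul_ne_zero hj pi_ne_zero) (by positivity)⟩
  have hsqrt := pi_mul_sqrt_sum_sq_eq hn β
  rw [discreteDirichletEigenvalue_eq hn.ne', pi_sq_mul_sum_sq_eq hn.ne']
  have hbound := abs_one_div_sum_sq_sub_one_div_sum_sin_sq_le hx hx₀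
  have hX := sum_sq_pos_of_ne_zero hx₀
  have hS := sum_sq_pos_of_ne_zero hβ₀
  set X := ∑ k, (β k * π / (2 * n)) ^ 2
  set Y := ∑ k, sin (β k * π / (2 * n)) ^ 2
  set S := ∑ k, β k ^ 2
  calc |1 / (4 * n ^ 2 * X) + 1 / -(4 * n ^ 2 * Y)|
      = |1 / (4 * n ^ 2) * (1 / X - 1 / Y)| := by
        rw [one_div_neg_eq_neg_one_div, ← sub_eq_add_neg, mul_sub, one_div_mul_one_div,
          one_div_mul_one_div]
    _ = 1 / (4 * n ^ 2) * |1 / X - 1 / Y| := by rw [abs_mul, abs_of_pos (by positivity)]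
    _ ≤ 1 / (4 * n ^ 2) * (π / 2 / √X) := by gcongr
    _ = π / (4 * n * (2 * n * √X)) := by field_simp
    _ = π / (4 * n * (π * √S)) := by rw [hsqrt]
    _ = 1 / 4 / (√S * n) := by field_simp

end Eigenvalues

/-- Estimate (bound7) of Lemma 3.13: there is `C = C(d)` such that for all `n ≥ 2` and
`β ∈ I_n^d`, `|1/(π²|β|²) + 1/λ_β| ≤ C/(|β| n)`, where
`λ_β = -π²(β₁²c_{β₁} + ⋯ + β_d²c_{β_d})` and `c_l = sin²(lπ/2n)/(lπ/2n)²`. -/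
theorem stmt16 (d : ℕ) (hd : 1 ≤ d) :
    ∃ C : ℝ, ∀ n : ℕ, 2 ≤ n → ∀ β : Fin d → ℕ, (∀ k, 1 ≤ β k ∧ β k ≤ n - 1) →
      |1 / (Real.pi ^ 2 * ∑ k, (β k : ℝ) ^ 2) +
          1 / (-Real.pi ^ 2 * ∑ k, (β k : ℝ) ^ 2 *
            (Real.sin ((β k : ℝ) * Real.pi / (2 * (n : ℝ))) ^ 2 /
              ((β k : ℝ) * Real.pi / (2 * (n : ℝ))) ^ 2))| ≤
        C / (Real.sqrt (∑ k, (β k : ℝ) ^ 2) * (n : ℝ)) := by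
  refine ⟨1 / 4, fun n _ β hβ => stmt16_general (β := fun k => (β k : ℝ)) (fun k => ?_) ?_⟩
  · simpa using (hβ k).2.trans (n.sub_le 1)
  · exact Function.ne_iff.2 ⟨⟨0, hd⟩, Nat.cast_ne_zero.2 (Nat.one_le_iff_ne_zero.1 (hβ _).1)⟩
end

section
/- Let d ≥ 1, n ≥ 2, and let (ρ_β)_{β ∈ I_n^d} be real numbers with 0 < ρ_β ≤ 1 for every β. Let A^ρ be the symmetric linear operator on ℝ^{I_n^d} whose eigenvectors are the orthonormal vectors (2/n)^{d/2} U_β, (U_β)_i = ∏_{k=1}^d sin(β_k π i_k/n), with eigenvalues λ_β / ρ_β, where λ_β = −π²(β_1² c_{β_1} + ⋯ + β_d² c_{β_d}) and c_l = sin²(lπ/2n)/(lπ/2n)². Let f : ℝ → ℝ be continuous and satisfy (s−t)(f(s)−f(t)) ≥ −L(s−t)² for all s,t ∈ ℝ, with 0 ≤ L < 4d. Then for every b ∈ ℝ^{I_n^d} there exists a unique u ∈ ℝ^{I_n^d} such that (A^ρ u)_i = f(u_i) + b_i for all i ∈ I_n^d. -/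
open Real

/-- The interior grid index set `I_n^d = {1,…,n-1}^d`. -/
def GridIdx (d n : ℕ) : Type := {i : Fin d → ℕ // ∀ k, 1 ≤ i k ∧ i k ≤ n - 1}

/-! Since `A` is symmetric, `g(u) - A u` is the gradient of the energy
`∑ i, ∫₀^{u i} g i - ⟪A u, u⟫ / 2`. Jordan's inequality `2/π |x| ≤ |sin x|` gives `c_l ≥ 4/π²`,
hence `λ_β / ρ_β ≤ -4d`; together with the one-sided bound on `f` this makes the gradient strongly
monotone with constant `4d - L > 0`. The energy then dominates a positive quadratic, so it attains
its minimum, and a strongly monotone map has at most one zero. The spectral bound controls all of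
`A` because the sine modes form an orthonormal basis: their inner products factor over the
coordinates into one-dimensional sums `∑ sin (aπj/n) sin (bπj/n)`.
-/

open Finset
open scoped RealInnerProductSpace

section StronglyMonotone

variable {E : Type*} [NormedAddCommGroup E] [InnerProductSpace ℝ E] {G : E → E} {m : ℝ}

/-- An operator `G` on a real inner product space is strongly monotone with constant `m` if
`m ‖x - y‖² ≤ ⟪G x - G y, x - y⟫` for all `x` and `y`. The sign of `m` is left free. -/
def StronglyMonotone (m : ℝ) (G : E → E) : Prop :=
  ∀ x y, m * ‖x - y‖ ^ 2 ≤ ⟪G x - G y, x - y⟫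

theorem StronglyMonotone.injective (hG : StronglyMonotone m G) (hm : 0 < m) :
    Function.Injective G := by
  intro x y hxy
  have hle : m * ‖x - y‖ ^ 2 ≤ 0 := by simpa [hxy] using hG x y
  have hsq : ‖x - y‖ ^ 2 = 0 := le_antisymm (nonpos_of_mul_nonpos_right hle hm) (sq_nonneg _)
  exact sub_eq_zero.1 (norm_eq_zero.1 (pow_eq_zero_iff two_ne_zero |>.1 hsq))

theorem hasDerivAt_comp_add_smul_of_hasGradientAt [CompleteSpace E] {J : E → ℝ} {x h g : E}
    {t : ℝ} (hJ : HasGradientAt J g (x + t • h)) :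
    HasDerivAt (fun s : ℝ => J (x + s • h)) ⟪g, h⟫ t := by
  have hline : HasDerivAt (fun s : ℝ => x + s • h) h t := by
    simpa using ((hasDerivAt_id t).smul_const h).const_add x
  exact hJ.hasFDerivAt.comp_hasDerivAt t hline

theorem StronglyMonotone.add_inner_add_le [CompleteSpace E] {J : E → ℝ}
    (hG : StronglyMonotone m G) (hJ : ∀ x, HasGradientAt J (G x) x) (x h : E) :
    J x + ⟪G x, h⟫ + m / 2 * ‖h‖ ^ 2 ≤ J (x + h) := by
  let φ : ℝ → ℝ := fun t => J (x + t • h) - (t * ⟪G x, h⟫ + m / 2 * ‖h‖ ^ 2 * t ^ 2)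
  have hφ (t : ℝ) : HasDerivAt φ (⟪G (x + t • h) - G x, h⟫ - m * ‖h‖ ^ 2 * t) t := by
    refine ((hasDerivAt_comp_add_smul_of_hasGradientAt (hJ _)).sub
      (((hasDerivAt_id t).mul_const _).add ((hasDerivAt_pow 2 t).const_mul _))).congr_deriv ?_
    rw [inner_sub_left]
    push_cast
    ring
  have hφ_nonneg (t : ℝ) (ht : 0 < t) : 0 ≤ ⟪G (x + t • h) - G x, h⟫ - m * ‖h‖ ^ 2 * t := by
    have hmono := hG (x + t • h) x
    rw [add_sub_cancel_left, norm_smul, mul_pow, Real.norm_eq_abs, sq_abs,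
      real_inner_smul_right] at hmono
    refine nonneg_of_mul_nonneg_right ?_ ht
    linarith
  have hmono : MonotoneOn φ (Set.Ici 0) :=
    monotoneOn_of_hasDerivWithinAt_nonneg (convex_Ici 0)
      (fun t _ => (hφ t).continuousAt.continuousWithinAt)
      (fun t _ => (hφ t).hasDerivWithinAt)
      (fun t ht => hφ_nonneg t (by simpa using ht))
  have h01 : φ 0 ≤ φ 1 := hmono (by simp) (by simp) zero_le_one
  simp only [φ, zero_smul, one_smul, add_zero] at h01
  linarith

theorem StronglyMonotone.tendsto_cocompact_atTop [ProperSpace E] {J : E → ℝ}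
    (hG : StronglyMonotone m G) (hJ : ∀ x, HasGradientAt J (G x) x) (hm : 0 < m) :
    Filter.Tendsto J (Filter.cocompact E) Filter.atTop := by
  have hbound (x : E) : J 0 + ‖x‖ * (m / 2 * ‖x‖ - ‖G 0‖) ≤ J x := by
    have hlower := hG.add_inner_add_le hJ 0 x
    have hinner := neg_le_of_abs_le (abs_real_inner_le_norm (G 0) x)
    rw [zero_add] at hlower
    linarith
  have hnorm := tendsto_norm_cocompact_atTop (E := E)
  refine Filter.tendsto_atTop_mono hbound (Filter.tendsto_atTop_add_const_left _ _ ?_)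
  refine hnorm.atTop_mul_atTop₀ (Filter.tendsto_atTop_add_const_right _ _ ?_)
  exact hnorm.const_mul_atTop (half_pos hm)

theorem StronglyMonotone.existsUnique_eq_zero [ProperSpace E] {J : E → ℝ}
    (hG : StronglyMonotone m G) (hJ : ∀ x, HasGradientAt J (G x) x) (hm : 0 < m) :
    ∃! x, G x = 0 := by
  have hcont : Continuous J :=
    continuous_iff_continuousAt.2 fun x => (hJ x).differentiableAt.continuousAt
  obtain ⟨x, hx⟩ := hcont.exists_forall_le (hG.tendsto_cocompact_atTop hJ hm)
  have hmin : IsLocalMin J x := Filter.Eventually.of_forall hx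
  have hzero : G x = 0 := by simpa using hmin.hasFDerivAt_eq_zero (hJ x).hasFDerivAt
  exact ⟨x, hzero, fun y hy => hG.injective hm (hy.trans hzero.symm)⟩

end StronglyMonotone

section OrthonormalBasis

variable {κ E : Type*} [Fintype κ] [NormedAddCommGroup E] [InnerProductSpace ℝ E]
  {v : OrthonormalBasis κ ℝ E} {T : E →ₗ[ℝ] E} {μ : κ → ℝ}

theorem inner_map_eq_sum_of_map_basis_eq_smul (hT : ∀ k, T (v k) = μ k • v k) (x y : E) :
    ⟪T x, y⟫ = ∑ k, μ k * (⟪v k, x⟫ * ⟪v k, y⟫) := by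
  conv_lhs => rw [← v.sum_repr' x]
  simp only [map_sum, map_smul, hT, sum_inner, real_inner_smul_left]
  exact sum_congr rfl fun k _ => by ring

theorem isSymmetric_of_map_basis_eq_smul (hT : ∀ k, T (v k) = μ k • v k) : T.IsSymmetric := by
  intro x y
  rw [← real_inner_comm x (T y), inner_map_eq_sum_of_map_basis_eq_smul hT,
    inner_map_eq_sum_of_map_basis_eq_smul hT]
  exact sum_congr rfl fun k _ => by ring

theorem inner_map_self_le_of_map_basis_eq_smul (hT : ∀ k, T (v k) = μ k • v k) {M : ℝ}
    (hμ : ∀ k, μ k ≤ M) (x : E) : ⟪T x, x⟫ ≤ M * ‖x‖ ^ 2 := by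
  rw [inner_map_eq_sum_of_map_basis_eq_smul hT, ← v.sum_sq_inner_right, mul_sum]
  simp only [← sq]
  exact sum_le_sum fun k _ => mul_le_mul_of_nonneg_right (hμ k) (sq_nonneg _)

end OrthonormalBasis

section SemilinearSystem

theorem hasGradientAt_inner_map_self_div_two {E : Type*} [NormedAddCommGroup E]
    [InnerProductSpace ℝ E] [CompleteSpace E] {T : E →ₗ[ℝ] E} (hT : T.IsSymmetric) (x : E) :
    HasGradientAt (fun x => ⟪T x, x⟫ / 2) (T x) x := by
  let T' : E →L[ℝ] E := ⟨T, hT.continuous⟩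
  simp only [hasGradientAt_iff_hasFDerivAt, div_eq_mul_inv]
  refine ((T'.hasFDerivAt.inner ℝ (hasFDerivAt_id x)).mul_const 2⁻¹).congr_fderiv ?_
  ext y
  have hsymm : ⟪T y, x⟫ = ⟪T x, y⟫ := (hT y x).trans (real_inner_comm _ _)
  simp [T', hsymm, ← two_mul]

variable {ι : Type*} {A : EuclideanSpace ℝ ι →ₗ[ℝ] EuclideanSpace ℝ ι} {g : ι → ℝ → ℝ}

/-- The residual `g(u) - A u` of the semilinear system `A u = g(u)` on `ℝ^ι`, where the
nonlinearity acts coordinatewise: `g(u)_i = g i (u i)`. -/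
def semilinearResidual (A : EuclideanSpace ℝ ι →ₗ[ℝ] EuclideanSpace ℝ ι) (g : ι → ℝ → ℝ)
    (u : EuclideanSpace ℝ ι) : EuclideanSpace ℝ ι :=
  WithLp.toLp 2 (fun i => g i (u i)) - A u

theorem semilinearResidual_eq_zero_iff {u : EuclideanSpace ℝ ι} :
    semilinearResidual A g u = 0 ↔ ∀ i, A u i = g i (u i) := by
  rw [semilinearResidual, sub_eq_zero, eq_comm, PiLp.ext_iff]

variable [Fintype ι]

theorem hasGradientAt_sum_comp_apply {F : ι → ℝ → ℝ} {F' : ι → ℝ} {u : EuclideanSpace ℝ ι}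
    (hF : ∀ i, HasDerivAt (F i) (F' i) (u i)) :
    HasGradientAt (fun u : EuclideanSpace ℝ ι => ∑ i, F i (u i)) (WithLp.toLp 2 F') u := by
  rw [hasGradientAt_iff_hasFDerivAt]
  refine (HasFDerivAt.fun_sum fun i _ =>
    (hF i).comp_hasFDerivAt u (PiLp.hasFDerivAt_apply 2 u i)).congr_fderiv ?_
  ext w
  simp [PiLp.inner_apply, mul_comm]

/-- The energy `∑ i, ∫₀^{u i} g i - ⟪A u, u⟫ / 2` whose critical points solve `A u = g(u)` when
`A` is symmetric. -/
noncomputable def semilinearEnergy (A : EuclideanSpace ℝ ι →ₗ[ℝ] EuclideanSpace ℝ ι)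
    (g : ι → ℝ → ℝ) (u : EuclideanSpace ℝ ι) : ℝ :=
  ∑ i, (∫ s in (0 : ℝ)..u i, g i s) - ⟪A u, u⟫ / 2

theorem hasGradientAt_semilinearEnergy (hA : A.IsSymmetric) (hg : ∀ i, Continuous (g i))
    (u : EuclideanSpace ℝ ι) :
    HasGradientAt (semilinearEnergy A g) (semilinearResidual A g u) u := by
  have hpotential : HasGradientAt (fun u : EuclideanSpace ℝ ι => ∑ i, ∫ s in (0 : ℝ)..u i, g i s)
      (WithLp.toLp 2 fun i => g i (u i)) u :=
    hasGradientAt_sum_comp_apply fun i => ((hg i).integral_hasStrictDerivAt 0 (u i)).hasDerivAt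
  have hquadratic := hasGradientAt_inner_map_self_div_two hA u
  rw [hasGradientAt_iff_hasFDerivAt, semilinearResidual, map_sub]
  exact hpotential.hasFDerivAt.sub hquadratic.hasFDerivAt

theorem stronglyMonotone_semilinearResidual {m L : ℝ} (hA : ∀ u, ⟪A u, u⟫ ≤ -m * ‖u‖ ^ 2)
    (hg : ∀ i s t, -L * (s - t) ^ 2 ≤ (s - t) * (g i s - g i t)) :
    StronglyMonotone (m - L) (semilinearResidual A g) := by
  intro u w
  have hnonlinear : -L * ‖u - w‖ ^ 2 ≤
      ⟪WithLp.toLp 2 (fun i => g i (u i)) - WithLp.toLp 2 (fun i => g i (w i)), u - w⟫ := by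
    rw [EuclideanSpace.real_norm_sq_eq, PiLp.inner_apply, mul_sum]
    exact sum_le_sum fun i _ => hg i (u i) (w i)
  have hsplit : semilinearResidual A g u - semilinearResidual A g w =
      (WithLp.toLp 2 (fun i => g i (u i)) - WithLp.toLp 2 (fun i => g i (w i))) - A (u - w) := by
    rw [semilinearResidual, semilinearResidual, map_sub]
    abel
  rw [hsplit, inner_sub_left]
  linarith [hA (u - w)]

theorem existsUnique_forall_map_apply_eq {m L : ℝ} (hA_symm : A.IsSymmetric)
    (hA : ∀ u, ⟪A u, u⟫ ≤ -m * ‖u‖ ^ 2) (hg_cont : ∀ i, Continuous (g i))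
    (hg : ∀ i s t, -L * (s - t) ^ 2 ≤ (s - t) * (g i s - g i t)) (hL : L < m) :
    ∃! u, ∀ i, A u i = g i (u i) := by
  simpa only [semilinearResidual_eq_zero_iff] using
    (stronglyMonotone_semilinearResidual hA hg).existsUnique_eq_zero
      (hasGradientAt_semilinearEnergy hA_symm hg_cont) (sub_pos.2 hL)

end SemilinearSystem

section Trigonometry

theorem sum_range_cos_int_mul_pi_div {n : ℕ} (hn : n ≠ 0) {m : ℤ} (hm : ¬ (2 * n : ℤ) ∣ m) :
    ∑ j ∈ range n, cos (m * π * j / n) = (1 - (-1) ^ m) / 2 := by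
  have hn' : (n : ℝ) ≠ 0 := Nat.cast_ne_zero.2 hn
  have hstep (k : ℤ) : m * π / n ≠ k * (2 * π) := by
    intro h
    refine hm ⟨k, ?_⟩
    field_simp at h
    have hm_eq : m = n * k * 2 := by exact_mod_cast h
    linarith
  have hsin : sin (m * π / n / 2) ≠ 0 := by
    refine sin_ne_zero_iff.2 fun k hk => hstep k ?_
    linarith
  have hsum := sum_cos n hstep 0
  have hnum : 2 * (sin (n * (m * π / n) / 2) * cos ((n - 1) * (m * π / n) / 2 + 0)) =
      (1 - (-1) ^ m) * sin (m * π / n / 2) := by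
    have hsub : n * (m * π / n) / 2 - ((n - 1) * (m * π / n) / 2 + 0) = m * π / n / 2 := by ring
    have hadd : n * (m * π / n) / 2 + ((n - 1) * (m * π / n) / 2 + 0) = m * π - m * π / n / 2 := by
      field_simp
      ring
    rw [← mul_assoc, two_mul_sin_mul_cos, hsub, hadd, sin_int_mul_pi_sub]
    ring
  calc ∑ j ∈ range n, cos (m * π * j / n)
      = ∑ j ∈ range n, cos (m * π / n * j + 0) :=
        sum_congr rfl fun j _ => by rw [add_zero, div_mul_eq_mul_div]
    _ = (1 - (-1) ^ m) / 2 := by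
        rw [hsum, div_eq_div_iff hsin two_ne_zero]
        linarith

theorem sum_range_sin_mul_sin {n a b : ℕ} (ha : 0 < a) (han : a < n) (hb : 0 < b) (hbn : b < n) :
    ∑ j ∈ range n, sin (a * π * j / n) * sin (b * π * j / n) =
      if a = b then (n : ℝ) / 2 else 0 := by
  have hsum_add := sum_range_cos_int_mul_pi_div (n := n) (m := a + b) (by lia)
    fun h => absurd (Int.le_of_dvd (by lia) h) (by lia)
  have hparity : (-1 : ℝ) ^ ((a : ℤ) + b) = (-1) ^ ((a : ℤ) - b) := by
    simp only [neg_one_zpow_eq_ite, Int.even_add, Int.even_sub]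
  have hproduct (j : ℕ) : sin (a * π * j / n) * sin (b * π * j / n) =
      (cos (((a - b : ℤ) : ℝ) * π * j / n) - cos (((a + b : ℤ) : ℝ) * π * j / n)) / 2 := by
    have hsub : ((a - b : ℤ) : ℝ) * π * j / n = a * π * j / n - b * π * j / n := by
      push_cast; ring
    have hadd : ((a + b : ℤ) : ℝ) * π * j / n = a * π * j / n + b * π * j / n := by
      push_cast; ring
    rw [hsub, hadd, cos_sub, cos_add]
    ring
  simp only [hproduct, ← sum_div, sum_sub_distrib]
  rw [hsum_add, hparity]
  split_ifs with hab
  · simp [hab]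
  · have hsum_sub := sum_range_cos_int_mul_pi_div (n := n) (m := a - b) (by lia)
      fun h => absurd (Int.eq_zero_of_abs_lt_dvd h (abs_lt.2 ⟨by lia, by lia⟩)) (by lia)
    rw [hsum_sub, sub_self, zero_div]

theorem sum_Icc_sin_mul_sin {n a b : ℕ} (ha : a ∈ Icc 1 (n - 1)) (hb : b ∈ Icc 1 (n - 1)) :
    ∑ j ∈ Icc 1 (n - 1), sin (a * π * j / n) * sin (b * π * j / n) =
      if a = b then (n : ℝ) / 2 else 0 := by
  rw [mem_Icc] at ha hb
  rw [← sum_range_sin_mul_sin (n := n) (a := a) (b := b) (by lia) (by lia) (by lia) (by lia)]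
  refine sum_subset (fun j hj => ?_) fun j hj hj' => ?_
  · rw [mem_Icc] at hj
    exact mem_range.2 (by lia)
  · rw [mem_range] at hj
    rw [mem_Icc] at hj'
    obtain rfl : j = 0 := by lia
    simp

theorem four_div_pi_sq_le_sin_sq_div_sq {x : ℝ} (hx : x ≠ 0) (hx' : |x| ≤ π / 2) :
    4 / π ^ 2 ≤ sin x ^ 2 / x ^ 2 := by
  rw [le_div_iff₀ (by positivity)]
  calc 4 / π ^ 2 * x ^ 2 = (2 / π * |x|) ^ 2 := by rw [mul_pow, div_pow, sq_abs]; norm_num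
    _ ≤ |sin x| ^ 2 := by gcongr; exact mul_abs_le_abs_sin hx'
    _ = sin x ^ 2 := sq_abs _

end Trigonometry

namespace GridIdx

variable {d n : ℕ}

instance : Fintype (GridIdx d n) :=
  Fintype.subtype (Fintype.piFinset fun _ => Icc 1 (n - 1)) fun i => by simp

protected theorem ext_iff {β γ : GridIdx d n} : β = γ ↔ ∀ k, β.1 k = γ.1 k :=
  Subtype.ext_iff.trans funext_iff

theorem coord_mem_Icc (β : GridIdx d n) (k : Fin d) : β.1 k ∈ Icc 1 (n - 1) :=
  mem_Icc.2 (β.2 k)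

theorem sum_prod {R : Type*} [CommSemiring R] (g : Fin d → ℕ → R) :
    ∑ i : GridIdx d n, ∏ k, g k (i.1 k) = ∏ k, ∑ j ∈ Icc 1 (n - 1), g k j := by
  rw [← sum_prod_piFinset]
  exact (sum_subtype (p := fun i : Fin d → ℕ => ∀ k, 1 ≤ i k ∧ i k ≤ n - 1) _ (by simp)
    fun i => ∏ k, g k (i k)).symm

/-- The normalized discrete sine mode `(2/n)^{d/2} U_β`. -/
noncomputable def sineMode (β : GridIdx d n) : EuclideanSpace ℝ (GridIdx d n) :=
  WithLp.toLp 2 fun i =>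
    (2 / (n : ℝ)) ^ ((d : ℝ) / 2) * ∏ k, sin ((β.1 k : ℝ) * π * (i.1 k : ℝ) / (n : ℝ))

theorem inner_sineMode (β γ : GridIdx d n) :
    ⟪sineMode β, sineMode γ⟫ = ∏ k, if β.1 k = γ.1 k then (1 : ℝ) else 0 := by
  have hscale : ((2 / (n : ℝ)) ^ ((d : ℝ) / 2)) ^ 2 = (2 / (n : ℝ)) ^ d := by
    rw [← rpow_mul_natCast (by positivity), Nat.cast_ofNat, div_mul_cancel₀ _ two_ne_zero,
      rpow_natCast]
  have hterm (i : GridIdx d n) : sineMode β i * sineMode γ i = ∏ k, 2 / (n : ℝ) *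
      (sin (β.1 k * π * i.1 k / n) * sin (γ.1 k * π * i.1 k / n)) := by
    rw [prod_mul_distrib, prod_mul_distrib, prod_const, card_univ, Fintype.card_fin, ← hscale]
    simp only [sineMode]
    ring
  calc ⟪sineMode β, sineMode γ⟫
      = ∑ i : GridIdx d n, ∏ k, 2 / (n : ℝ) *
          (sin (β.1 k * π * i.1 k / n) * sin (γ.1 k * π * i.1 k / n)) := by
        simp only [PiLp.inner_apply, ← hterm, RCLike.inner_apply, conj_trivial]
        exact sum_congr rfl fun i _ => mul_comm _ _
    _ = ∏ k, 2 / (n : ℝ) * ∑ j ∈ Icc 1 (n - 1),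
          sin (β.1 k * π * j / n) * sin (γ.1 k * π * j / n) := by
        simp only [mul_sum]
        exact sum_prod fun k j => 2 / (n : ℝ) * (sin (β.1 k * π * j / n) * sin (γ.1 k * π * j / n))
    _ = ∏ k, if β.1 k = γ.1 k then (1 : ℝ) else 0 := by
        refine prod_congr rfl fun k _ => ?_
        have hn : (n : ℝ) ≠ 0 := Nat.cast_ne_zero.2 (by have := β.2 k; lia)
        rw [sum_Icc_sin_mul_sin (β.coord_mem_Icc k) (γ.coord_mem_Icc k), mul_ite, mul_zero]
        congr 1
        field_simp

theorem orthonormal_sineMode : Orthonormal ℝ (sineMode : GridIdx d n → _) := by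
  classical
  rw [orthonormal_iff_ite]
  intro β γ
  simp [inner_sineMode, Fintype.prod_ite_zero, GridIdx.ext_iff]

/-- The discrete sine modes as an orthonormal basis of `ℝ^{I_n^d}`. -/
noncomputable def sineBasis (d n : ℕ) :
    OrthonormalBasis (GridIdx d n) ℝ (EuclideanSpace ℝ (GridIdx d n)) :=
  OrthonormalBasis.mk orthonormal_sineMode
    (orthonormal_sineMode.linearIndependent.span_eq_top_of_card_eq_finrank'
      finrank_euclideanSpace.symm).ge

/-- The eigenvalue `λ_β` of the lattice Laplacian on the sine mode of index `β`, with
`c_l = sin²(lπ/2n)/(lπ/2n)²` written out. -/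
noncomputable def laplaceEigenvalue (β : GridIdx d n) : ℝ :=
  -π ^ 2 * ∑ k, (β.1 k : ℝ) ^ 2 *
    (sin ((β.1 k : ℝ) * π / (2 * (n : ℝ))) ^ 2 / ((β.1 k : ℝ) * π / (2 * (n : ℝ))) ^ 2)

theorem laplaceEigenvalue_le_neg_four_mul_sum_sq (β : GridIdx d n) :
    laplaceEigenvalue β ≤ -(4 * ∑ k, (β.1 k : ℝ) ^ 2) := by
  have hratio (k : Fin d) : 4 / π ^ 2 ≤
      sin (β.1 k * π / (2 * n)) ^ 2 / (β.1 k * π / (2 * n)) ^ 2 := by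
    obtain ⟨hpos, hle⟩ : 0 < β.1 k ∧ β.1 k ≤ n := by have := β.2 k; lia
    have hβ : (0 : ℝ) < β.1 k := Nat.cast_pos.2 hpos
    have hn : (0 : ℝ) < n := Nat.cast_pos.2 (hpos.trans_le hle)
    have hx : 0 < β.1 k * π / (2 * n) := div_pos (mul_pos hβ pi_pos) (mul_pos two_pos hn)
    refine four_div_pi_sq_le_sin_sq_div_sq hx.ne' ?_
    rw [abs_of_pos hx, div_le_div_iff₀ (mul_pos two_pos hn) two_pos]
    have hle' : (β.1 k : ℝ) ≤ n := Nat.cast_le.2 hle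
    nlinarith [pi_pos]
  have hsum : ∑ k, (β.1 k : ℝ) ^ 2 * (4 / π ^ 2) ≤ ∑ k, (β.1 k : ℝ) ^ 2 *
      (sin (β.1 k * π / (2 * n)) ^ 2 / (β.1 k * π / (2 * n)) ^ 2) :=
    sum_le_sum fun k _ => mul_le_mul_of_nonneg_left (hratio k) (sq_nonneg _)
  calc laplaceEigenvalue β ≤ -π ^ 2 * ∑ k, (β.1 k : ℝ) ^ 2 * (4 / π ^ 2) :=
        mul_le_mul_of_nonpos_left hsum (neg_nonpos.2 (sq_nonneg π))
    _ = -(4 * ∑ k, (β.1 k : ℝ) ^ 2) := by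
        rw [← sum_mul]
        field_simp

theorem dim_le_sum_sq (β : GridIdx d n) : (d : ℝ) ≤ ∑ k, (β.1 k : ℝ) ^ 2 := by
  have hone (k : Fin d) : (1 : ℝ) ≤ (β.1 k : ℝ) ^ 2 := by
    exact_mod_cast Nat.one_le_pow 2 _ (β.2 k).1
  simpa using sum_le_sum fun k (_ : k ∈ univ) => hone k

theorem laplaceEigenvalue_div_le (β : GridIdx d n) {r : ℝ} (hr : 0 < r) (hr' : r ≤ 1) :
    laplaceEigenvalue β / r ≤ -(4 * d) := by
  have hle : laplaceEigenvalue β ≤ -(4 * d) := by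
    linarith [laplaceEigenvalue_le_neg_four_mul_sum_sq β, dim_le_sum_sq β]
  rw [div_le_iff₀ hr]
  nlinarith [d.cast_nonneg (α := ℝ)]

end GridIdx

/-- Proposition 3.9: the lattice scheme `A^ρ u = f(u) + b` has a unique solution, where `A^ρ`
is the symmetric linear operator on `ℝ^{I_n^d}` whose eigenvectors are the orthonormal discrete
sine vectors `(2/n)^{d/2} U_β` with eigenvalues `λ_β / ρ_β`, `0 < ρ_β ≤ 1`, and `f` is
continuous with `(s-t)(f(s)-f(t)) ≥ -L(s-t)²`, `0 ≤ L < 4d`. -/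
theorem stmt17 (d n : ℕ) (hd : 1 ≤ d) (hn : 2 ≤ n)
    (ρ : GridIdx d n → ℝ) (hρ : ∀ β, 0 < ρ β ∧ ρ β ≤ 1)
    (c : ℕ → ℝ)
    (hc : ∀ l : ℕ, c l =
      Real.sin ((l : ℝ) * Real.pi / (2 * (n : ℝ))) ^ 2 / ((l : ℝ) * Real.pi / (2 * (n : ℝ))) ^ 2)
    (lam : GridIdx d n → ℝ)
    (hlam : ∀ β, lam β = -Real.pi ^ 2 * ∑ k, (β.1 k : ℝ) ^ 2 * c (β.1 k))
    (e : GridIdx d n → GridIdx d n → ℝ)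
    (he : ∀ β i, e β i =
      (2 / (n : ℝ)) ^ ((d : ℝ) / 2) *
        ∏ k, Real.sin ((β.1 k : ℝ) * Real.pi * (i.1 k : ℝ) / (n : ℝ)))
    (Aρ : (GridIdx d n → ℝ) →ₗ[ℝ] (GridIdx d n → ℝ))
    (hA : ∀ β, Aρ (e β) = (lam β / ρ β) • e β)
    (f : ℝ → ℝ) (hfc : Continuous f) (L : ℝ) (hL0 : 0 ≤ L) (hL : L < 4 * d)
    (hmono : ∀ s t : ℝ, (s - t) * (f s - f t) ≥ -L * (s - t) ^ 2)
    (b : GridIdx d n → ℝ) :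
    ∃! u : GridIdx d n → ℝ, ∀ i, Aρ u i = f (u i) + b i := by
  obtain rfl : lam = GridIdx.laplaceEigenvalue := funext fun β => by
    simp only [hlam, hc, GridIdx.laplaceEigenvalue]
  obtain rfl : e = fun β => (GridIdx.sineBasis d n β).ofLp := funext₂ fun β i => by
    simp only [he, GridIdx.sineBasis, OrthonormalBasis.coe_mk, GridIdx.sineMode]
  let ℓ := WithLp.linearEquiv 2 ℝ (GridIdx d n → ℝ)
  have hA' (β) : ℓ.symm.conj Aρ (GridIdx.sineBasis d n β) =
      (GridIdx.laplaceEigenvalue β / ρ β) • GridIdx.sineBasis d n β :=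
    ℓ.injective (hA β)
  have hμ (β) : GridIdx.laplaceEigenvalue β / ρ β ≤ -(4 * d) :=
    β.laplaceEigenvalue_div_le (hρ β).1 (hρ β).2
  refine ℓ.toEquiv.existsUnique_congr_right.1 <| existsUnique_forall_map_apply_eq
    (g := fun i s => f s + b i) (isSymmetric_of_map_basis_eq_smul hA')
    (inner_map_self_le_of_map_basis_eq_smul hA' hμ)
    (fun i => hfc.add_const (b i)) (fun i s t => ?_) hL
  simpa using hmono s t
end
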